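/- arXiv:2506.15377 — 2 statements merged into one kernel-verified Lean document; each statement's English description precedes it below -/
import Mathlib

section
/- In the navigation causal graph, all causal influence between observations two or more steps apart is mediated by every intermediate observation. Precisely: let the vertex set be V = (ℕ × Bool) ⊕ Unit, where (i, false) denotes the observation O_i, (i, true) denotes the action a_i, and the Unit vertex denotes the objective Obj. Define the edge relation E by: E (O_i) (a_i) for all i, E (O_i) (O_{i+1}) for all i, E (a_i) (O_{i+1}) for all i, and E Obj (a_i) for all i, with no other edges. Then (1) for all s, t ∈ ℕ with s + 2 ≤ t, there is no edge E (O_s) (O_t); and (2) for all s, t ∈ ℕ with s + 2 ≤ t, every directed path from O_s to O_t in the relation E (i.e., every finite sequence of vertices starting at O_s, ending at O_t, with consecutive vertices related by E) contains the vertex O_u for every u with s ≤ u ≤ t. -/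
/-! Every edge raises the time index by at most one, and an edge that raises it ends at an
observation. Hence an edge leaving the set of observations and actions before time `u` must end at
`O_u` (`NavEdge.before_or_eq`). A path from `O_s` to `O_t` with `s < u ≤ t` starts in this set and
ends outside it, so it passes through `O_u` (`navObs_mem_of_before`). Here the objective counts as
having no time index; it has no incoming edges, so it lies on no path that starts elsewhere. -/

/-- Vertices of the navigation causal graph: `Sum.inl (i, false)` is the
observation `O_i`, `Sum.inl (i, true)` is the action `a_i`, and `Sum.inr ()`
is the objective `Obj`. -/
abbrev NavVertex : Type := (ℕ × Bool) ⊕ Unit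

/-- The observation `O_i`. -/
def navObs (i : ℕ) : NavVertex := Sum.inl (i, false)

/-- The action `a_i`. -/
def navAct (i : ℕ) : NavVertex := Sum.inl (i, true)

/-- The objective `Obj`. -/
def navObj : NavVertex := Sum.inr ()

/-- Edges of the navigation causal graph: exactly `O_i → a_i`, `O_i → O_{i+1}`,
`a_i → O_{i+1}`, and `Obj → a_i`, and no other edges. -/
inductive NavEdge : NavVertex → NavVertex → Prop where
  | obs_act (i : ℕ) : NavEdge (navObs i) (navAct i)
  | obs_obs (i : ℕ) : NavEdge (navObs i) (navObs (i + 1))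
  | act_obs (i : ℕ) : NavEdge (navAct i) (navObs (i + 1))
  | obj_act (i : ℕ) : NavEdge navObj (navAct i)

/-- The vertices of time index below `u`, other than the objective: the `O_i` and `a_i` with
`i < u`. The objective is left out because it has edges to actions at every time. -/
def NavBefore (u : ℕ) (v : NavVertex) : Prop := ∃ i < u, v = navObs i ∨ v = navAct i

/-- An edge leaving the vertices before time `u` can only end at `O_u`. -/
lemma NavEdge.before_or_eq {u : ℕ} {v w : NavVertex} (h : NavEdge v w) (hv : NavBefore u v) :
    NavBefore u w ∨ w = navObs u := by
  obtain ⟨i, hi, hv⟩ := hv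
  cases h with
  | obs_act j =>
    have : j = i := by simpa [navObs, navAct] using hv
    exact .inl ⟨i, hi, .inr (this ▸ rfl)⟩
  | obs_obs j | act_obs j =>
    have hj : j = i := by simpa [navObs, navAct] using hv
    subst hj
    rcases Nat.lt_or_eq_of_le (Nat.succ_le_of_lt hi) with h | h
    · exact .inl ⟨j + 1, h, .inl rfl⟩
    · exact .inr (h ▸ rfl)
  | obj_act j => simp [navObs, navAct, navObj] at hv

lemma navObs_mem_of_before {u t : ℕ} (hut : u ≤ t) (l : List NavVertex) :
    ∀ v : NavVertex, NavBefore u v → (v :: l).getLast? = some (navObs t) →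
      (v :: l).IsChain NavEdge → navObs u ∈ l := by
  induction l with
  | nil =>
    rintro v ⟨i, hi, hv⟩ hlast -
    obtain rfl : v = navObs t := by simpa using hlast
    have : t = i := by simpa [navObs, navAct] using hv
    omega
  | cons w l ih =>
    intro v hv hlast hc
    rw [List.isChain_cons_cons] at hc
    rcases hc.1.before_or_eq hv with hw | rfl
    · exact List.mem_cons_of_mem _ (ih w hw (by simpa using hlast) hc.2)
    · exact List.mem_cons_self

/-- In the navigation causal graph: (1) there is no direct edge between
observations two or more steps apart, and (2) every directed path from `O_s`
to `O_t` with `s + 2 ≤ t` passes through every intermediate observation `O_u`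
for `s ≤ u ≤ t`. -/
theorem nav_no_longterm_direct_cause_and_mediation :
    (∀ s t : ℕ, s + 2 ≤ t → ¬ NavEdge (navObs s) (navObs t)) ∧
    (∀ s t : ℕ, s + 2 ≤ t →
      ∀ p : List NavVertex, p.head? = some (navObs s) → p.getLast? = some (navObs t) →
        p.Chain' NavEdge → ∀ u : ℕ, s ≤ u → u ≤ t → navObs u ∈ p) := by
  refine ⟨fun s t hst h => ?_, fun s t _ p hhead hlast hc u hsu hut => ?_⟩
  · generalize hv : navObs s = v at h
    generalize hw : navObs t = w at h
    cases h <;> simp [navObs, navAct, navObj] at hv hw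
    omega
  · cases p with
    | nil => simp at hhead
    | cons v l =>
      obtain rfl : v = navObs s := by simpa using hhead
      rcases Nat.eq_or_lt_of_le hsu with rfl | hlt
      · exact List.mem_cons_self
      · exact List.mem_cons_of_mem _
          (navObs_mem_of_before hut l _ ⟨s, hlt, .inl rfl⟩ hlast hc)
end

section
/- A Jensen-type lower bound on the KL divergence from a distribution to a finite mixture, in the discrete case: let X and α be nonempty finite types, let f : X → ℝ≥0 be a probability mass function (∑_x f(x) = 1), let (g_k)_{k : α} be probability mass functions on X, and let w : α → ℝ≥0 with ∑_k w_k = 1. Assume f(x) > 0 implies ∑_k w_k g_k(x) > 0. Then KL(f ∥ ∑_k w_k g_k) ≥ ∑_{x : f(x)>0} f(x) log f(x) − log( ∑_k w_k ∑_x f(x) g_k(x) ); that is, the KL divergence from f to the mixture is at least the negative entropy of f minus the logarithm of the mixture of the cross-sums ∑_x f(x) g_k(x). -/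
open scoped NNReal

/-!
On the support `S` of `f`, write `m x = ∑ k, w k * g k x`, which is positive by hypothesis. There
`log (f x / m x) = log (f x) - log (m x)`, so the claim reduces to
`∑ x ∈ S, f x * log (m x) ≤ log (∑ x ∈ S, f x * m x)`, Jensen's inequality
(`ConcaveOn.le_map_sum`) for the concave logarithm on `(0, ∞)` with the weights `f x`.
Points outside `S` contribute nothing to `∑ x, f x * m x`, and exchanging the two sums turns that
sum into `∑ k, w k * ∑ x, f x * g k x`.
-/

/-- Jensen-type lower bound on the KL divergence from a discrete distribution to
a finite mixture: `KL(f ∥ ∑ k, w k • g k)` is at least the negative entropy of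
`f` minus the logarithm of the mixture of the cross-sums `∑ x, f x * g k x`. -/
theorem klDiv_mixture_ge_negEntropy_sub_log_cross
    {X α : Type*} [Fintype X] [Fintype α] [Nonempty X] [Nonempty α]
    (f : X → ℝ≥0) (hf : ∑ x, f x = 1)
    (g : α → X → ℝ≥0) (hg : ∀ k, ∑ x, g k x = 1)
    (w : α → ℝ≥0) (hw : ∑ k, w k = 1)
    (hpos : ∀ x, 0 < f x → 0 < ∑ k, w k * g k x) :
    ∑ x ∈ Finset.univ.filter (fun x => 0 < f x),
        (f x : ℝ) * Real.log ((f x : ℝ) / ∑ k, (w k : ℝ) * (g k x : ℝ)) ≥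
      (∑ x ∈ Finset.univ.filter (fun x => 0 < f x), (f x : ℝ) * Real.log (f x)) -
        Real.log (∑ k, (w k : ℝ) * ∑ x, (f x : ℝ) * (g k x : ℝ)) := by
  set S := Finset.univ.filter (fun x => 0 < f x) with hS
  have hm : ∀ x ∈ S, 0 < ∑ k, (w k : ℝ) * (g k x : ℝ) := fun x hx => by
    exact_mod_cast hpos x (Finset.mem_filter.mp hx).2
  have hsupp : ∀ h : X → ℝ, ∑ x ∈ S, (f x : ℝ) * h x = ∑ x, (f x : ℝ) * h x := fun h => by
    refine Finset.sum_subset (Finset.subset_univ S) fun x _ hx => ?_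
    have hfx : f x = 0 := by simpa [hS] using hx
    simp [hfx]
  have hfS : ∑ x ∈ S, (f x : ℝ) = 1 := by
    have h1 := hsupp fun _ => 1
    simp only [mul_one] at h1
    rw [h1]
    exact_mod_cast hf
  have hcross : ∑ k, (w k : ℝ) * ∑ x, (f x : ℝ) * (g k x : ℝ)
      = ∑ x ∈ S, (f x : ℝ) * ∑ k, (w k : ℝ) * (g k x : ℝ) := by
    rw [hsupp]
    simp only [Finset.mul_sum]
    rw [Finset.sum_comm]
    exact Finset.sum_congr rfl fun x _ => Finset.sum_congr rfl fun k _ => by ring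
  have hjensen := strictConcaveOn_log_Ioi.concaveOn.le_map_sum
    (t := S) (w := fun x => (f x : ℝ)) (p := fun x => ∑ k, (w k : ℝ) * (g k x : ℝ))
    (fun x _ => (f x).coe_nonneg) hfS hm
  simp only [smul_eq_mul] at hjensen
  have hsplit : ∑ x ∈ S, (f x : ℝ) * Real.log ((f x : ℝ) / ∑ k, (w k : ℝ) * (g k x : ℝ))
      = ∑ x ∈ S, (f x : ℝ) * Real.log (f x)
        - ∑ x ∈ S, (f x : ℝ) * Real.log (∑ k, (w k : ℝ) * (g k x : ℝ)) := by
    rw [← Finset.sum_sub_distrib]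
    refine Finset.sum_congr rfl fun x hx => ?_
    have hfx : (f x : ℝ) ≠ 0 := by exact_mod_cast (Finset.mem_filter.mp hx).2.ne'
    rw [Real.log_div hfx (hm x hx).ne', mul_sub]
  rw [hsplit, hcross]
  linarith
end
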